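/- Let H be a complex Hilbert space and T : H → H a contraction, with D₊ = √(1 − T T*), 𝒟₊ = closure(range D₊), and C : H → ℓ²(ℕ, 𝒟₊) defined by (C h)ₙ = D₊ (T*)ⁿ h. Then C is an isometry (‖C h‖ = ‖h‖ for all h ∈ H) if and only if T is *-stable, i.e. (T*)ⁿ h → 0 in norm for every h ∈ H. -/

import Mathlib

/-!
The defining relation `D₊² = 1 - T T*` says that `‖D₊ x‖² = ‖x‖² - ‖T* x‖²`, so along the orbit
of `h` under `T*` the sums telescope: `∑_{i < n} ‖D₊ (T*)ⁱ h‖² = ‖h‖² - ‖(T*)ⁿ h‖²`. The left-hand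
side tends to `‖C h‖²`, hence `‖C h‖ = ‖h‖` exactly when the remainder `‖(T*)ⁿ h‖²` tends to zero.
-/

open ContinuousLinearMap Filter

/-- The defect space of an operator: the closure of its range. -/
noncomputable def defectSpace {H : Type*} [NormedAddCommGroup H] [InnerProductSpace ℂ H]
    (D : H →L[ℂ] H) : Submodule ℂ H :=
  (LinearMap.range (D : H →ₗ[ℂ] H)).topologicalClosure

section Iterate

variable {X Y : Type*} [SeminormedAddCommGroup X] [SeminormedAddCommGroup Y] {A : X → X} {D : X → Y}

theorem sum_sq_norm_apply_iterate (hAD : ∀ x, ‖D x‖ ^ 2 = ‖x‖ ^ 2 - ‖A x‖ ^ 2) (x : X) (n : ℕ) :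
    ∑ i ∈ Finset.range n, ‖D (A^[i] x)‖ ^ 2 = ‖x‖ ^ 2 - ‖A^[n] x‖ ^ 2 := by
  simp only [hAD, ← Function.iterate_succ_apply' A]
  exact Finset.sum_range_sub' (fun i => ‖A^[i] x‖ ^ 2) n

theorem tendsto_sq_norm_zero_iff {ι : Type*} {l : Filter ι} {u : ι → X} :
    Tendsto (fun i => ‖u i‖ ^ 2) l (nhds 0) ↔ Tendsto u l (nhds 0) := by
  rw [tendsto_zero_iff_norm_tendsto_zero (f := u)]
  constructor <;> intro hu
  · simpa only [Real.sqrt_sq (norm_nonneg _), Real.sqrt_zero] using hu.sqrt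
  · simpa only [zero_pow two_ne_zero] using hu.pow 2

theorem hasSum_sq_norm_apply_iterate_iff (hAD : ∀ x, ‖D x‖ ^ 2 = ‖x‖ ^ 2 - ‖A x‖ ^ 2) (x : X) :
    HasSum (fun n => ‖D (A^[n] x)‖ ^ 2) (‖x‖ ^ 2) ↔
      Tendsto (fun n => A^[n] x) atTop (nhds 0) := by
  rw [hasSum_iff_tendsto_nat_of_nonneg fun _ => sq_nonneg _]
  simp only [sum_sq_norm_apply_iterate hAD]
  rw [← tendsto_sq_norm_zero_iff, ← tendsto_const_sub_iff (‖x‖ ^ 2) (c := 0), sub_zero]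

end Iterate

theorem lp_two_norm_eq_iff_hasSum_sq {ι : Type*} {E : ι → Type*} [∀ i, NormedAddCommGroup (E i)]
    (f : lp E 2) {r : ℝ} (hr : 0 ≤ r) : ‖f‖ = r ↔ HasSum (fun i => ‖f i‖ ^ 2) (r ^ 2) := by
  have hasSum_sq : HasSum (fun i => ‖f i‖ ^ 2) (‖f‖ ^ 2) := by
    simpa using lp.hasSum_norm (p := 2) (by norm_num) f
  rw [hasSum_sq.summable.hasSum_iff, hasSum_sq.tsum_eq, sq_eq_sq₀ (norm_nonneg f) hr]

section Hilbert

variable {𝕜 H K : Type*} [RCLike 𝕜]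
  [NormedAddCommGroup H] [InnerProductSpace 𝕜 H] [CompleteSpace H]
  [NormedAddCommGroup K] [InnerProductSpace 𝕜 K] [CompleteSpace K]

theorem sq_norm_apply_eq_sub_of_adjoint_comp_self {L : Type*} [NormedAddCommGroup L]
    [InnerProductSpace 𝕜 L] [CompleteSpace L] {A : H →L[𝕜] L} {D : H →L[𝕜] K}
    (hD : adjoint D ∘L D = 1 - adjoint A ∘L A) (x : H) : ‖D x‖ ^ 2 = ‖x‖ ^ 2 - ‖A x‖ ^ 2 := by
  rw [apply_norm_sq_eq_inner_adjoint_right D, hD, sub_apply, one_apply_eq_self,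
    inner_sub_right, map_sub, inner_self_eq_norm_sq, apply_norm_sq_eq_inner_adjoint_right A]

theorem defect_embedding_isometry_iff_star_stable_general {T : H →L[𝕜] H} {D : H →L[𝕜] K}
    (hD : adjoint D ∘L D = 1 - T ∘L adjoint T) {S : Submodule 𝕜 K} {h : H}
    {c : lp (fun _ : ℕ => ↥S) 2} (hc : ∀ n, (c n : K) = D ((adjoint T ^ n) h)) :
    ‖c‖ = ‖h‖ ↔ Tendsto (fun n : ℕ => (adjoint T ^ n) h) atTop (nhds 0) := by
  have norm_defect (x : H) : ‖D x‖ ^ 2 = ‖x‖ ^ 2 - ‖adjoint T x‖ ^ 2 :=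
    sq_norm_apply_eq_sub_of_adjoint_comp_self (by rw [adjoint_adjoint, hD]) x
  have norm_coord (n : ℕ) : ‖c n‖ = ‖D ((adjoint T ^ n) h)‖ := by
    rw [← Submodule.norm_coe, hc]
  simp only [lp_two_norm_eq_iff_hasSum_sq c (norm_nonneg h), norm_coord,
    FunLike.coe_pow_eq_iterate]
  exact hasSum_sq_norm_apply_iterate_iff norm_defect h

end Hilbert

/-- For a contraction `T` with defect operator `D₊ = √(1 - T T*)` and the map
`C : H → ℓ²(ℕ, 𝒟₊)`, `(C h)ₙ = D₊ (T*)ⁿ h`, the map `C` is an isometry if and only if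
`T` is `*`-stable, i.e., `(T*)ⁿ h → 0` in norm for every `h`. -/
theorem defect_embedding_isometry_iff_star_stable
    {H : Type*} [NormedAddCommGroup H] [InnerProductSpace ℂ H] [CompleteSpace H]
    (T Dp : H →L[ℂ] H) (hT : ‖T‖ ≤ 1)
    (hDp : Dp.IsPositive) (hDp2 : Dp ∘L Dp = 1 - T ∘L adjoint T)
    (C : H →L[ℂ] lp (fun _ : ℕ => ↥(defectSpace Dp)) 2)
    (hC : ∀ (h : H) (n : ℕ), ((C h) n : H) = Dp (((adjoint T) ^ n) h)) :
    (∀ h : H, ‖C h‖ = ‖h‖) ↔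
      ∀ h : H, Tendsto (fun n : ℕ => ((adjoint T) ^ n) h) atTop (nhds 0) :=
  forall_congr' fun h =>
    defect_embedding_isometry_iff_star_stable_general (by rwa [hDp.isSelfAdjoint.adjoint_eq]) (hC h)
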